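/- Let a ∈ ℝ, a ≠ 0. With Hₙ the physicists' Hermite polynomials, set P_{n,a}(t) = Hₙ(t)·diag(1,1) + n·H_{n−1}(t)·[[0,−a],[−a,a²t]] (i.e. parameter ξ = 1), and P_{1,a}(t) = [[2t,−a],[−a,(a²+2)t]]. Define the first order operators 𝒜₁(y) = y·A_{1,0} + y'·A_{1,1} with A_{1,0} = −P_{1,a}' and A_{1,1} = (P_{1,a}')⁻¹·P_{1,a}·P_{1,a}', and 𝒜₂(y) = y·A_{2,0} + y'·A_{2,1} with A_{2,0} = −diag(1/2, 1/(a²+2)) and A_{2,1} = −(𝒫_{1,2,a}')⁻¹·𝒫_{1,2,a}·A_{2,0}, where 𝒫_{1,2,a} = 𝒜₁(P_{2,a}). Then for every matrix polynomial P of degree s with s ∉ {1,2} and nonsingular leading coefficient L, the function 𝒜₂(𝒜₁(P)) is a matrix polynomial of degree s with leading coefficient (s−1)(s/2 − 1)·L (which is nonsingular). -/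

import Mathlib

/-!
The theorem rests on one identity. Write `D = P_{1,a}' = diag(2, a²+2)`, a constant matrix, and
`A₁₁ = D⁻¹ P_{1,a} D`. Since `A₁₁' = D`, the derivative of `𝒜₁(P) = -P D + P' A₁₁` collapses:

  `(𝒜₁(P))' = P'' A₁₁`   (`pd_T1`).

Applied to `P_{2,a}`, whose second derivative `E = diag(8, 8(a²+1))` is constant, this gives
`𝒫_{1,2,a}' = E A₁₁`, hence in `𝒜₂(𝒜₁(P))` the factor `A₁₁` of `(𝒜₁(P))' = P'' A₁₁` cancels the
`A₁₁⁻¹` of `(𝒫_{1,2,a}')⁻¹ = A₁₁⁻¹ E⁻¹`, and with `A_{2,0} = -D⁻¹`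

  `𝒜₂(𝒜₁(P)) = P - P' G + P'' K`,   `G = D⁻¹ P_{1,a}`,   `K = E⁻¹ 𝒫_{1,2,a} D⁻¹`.

Here `G = t + O(1)` and `K = t²/2 + O(t)` are matrix polynomials, so the degree does not increase and
the coefficient of `tˢ` is multiplied by `1 - s + s(s-1)/2 = (s-1)(s/2-1)` (`coeff_Rpoly`), which
vanishes only for `s ∈ {1, 2}`.
-/

open MeasureTheory Matrix Polynomial

noncomputable section

abbrev M2 := Matrix (Fin 2) (Fin 2) ℝ

/-- the `n`-th physicists' Hermite polynomial `Hₙ(t) = (−1)ⁿ e^{t²} (d/dt)ⁿ e^{−t²}`. -/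
def H (n : ℕ) (t : ℝ) : ℝ :=
  (-1 : ℝ) ^ n * Real.exp (t ^ 2) * iteratedDeriv n (fun s => Real.exp (-(s ^ 2))) t

/-- the matrix polynomials `P_{n,a}` (parameter `ξ = 1`). -/
def Pher (a : ℝ) (n : ℕ) (t : ℝ) : M2 :=
  H n t • Matrix.diagonal ![1, 1] + ((n : ℝ) * H (n - 1) t) • !![0, -a; -a, a ^ 2 * t]

def matDeriv (f : ℝ → M2) : ℝ → M2 :=
  fun t => Matrix.of fun i j => deriv (fun s => f s i j) t

/-- `𝒜₁(y) = y·A_{1,0} + y'·A_{1,1}` with `A_{1,0} = −P_{1,a}'` and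
`A_{1,1} = (P_{1,a}')⁻¹·P_{1,a}·P_{1,a}'`. -/
def A1op (a : ℝ) (y : ℝ → M2) : ℝ → M2 :=
  fun t => y t * (-(matDeriv (Pher a 1) t))
    + matDeriv y t * ((matDeriv (Pher a 1) t)⁻¹ * Pher a 1 t * matDeriv (Pher a 1) t)

/-- `𝒫_{1,2,a} = 𝒜₁(P_{2,a})`. -/
def P12 (a : ℝ) : ℝ → M2 := A1op a (Pher a 2)

/-- `A_{2,0} = −diag(1/2, 1/(a²+2))`. -/
def A20 (a : ℝ) : M2 := -Matrix.diagonal ![(1 : ℝ) / 2, 1 / (a ^ 2 + 2)]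

/-- `𝒜₂(y) = y·A_{2,0} + y'·A_{2,1}` with `A_{2,1} = −(𝒫_{1,2,a}')⁻¹·𝒫_{1,2,a}·A_{2,0}`. -/
def A2op (a : ℝ) (y : ℝ → M2) : ℝ → M2 :=
  fun t => y t * A20 a
    + matDeriv y t * (-((matDeriv (P12 a) t)⁻¹ * P12 a t * A20 a))

/-! ### Matrix polynomials, their values and derivatives -/

/-- Matrix polynomials, as matrices with polynomial entries. -/
abbrev PM := Matrix (Fin 2) (Fin 2) (Polynomial ℝ)

/-- Evaluation of a matrix polynomial at `t`. -/
def ev (t : ℝ) : PM →+* M2 := (evalRingHom t).mapMatrix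

/-- Entrywise formal derivative of a matrix polynomial. -/
def pd (Q : PM) : PM := Q.map derivative

lemma ev_apply (t : ℝ) (Q : PM) (i j : Fin 2) : ev t Q i j = (Q i j).eval t := rfl

lemma pd_apply (Q : PM) (i j : Fin 2) : pd Q i j = derivative (Q i j) := rfl

lemma pd_neg (A : PM) : pd (-A) = -pd A := by
  ext1 i j; simp [pd_apply]

lemma pd_add (A B : PM) : pd (A + B) = pd A + pd B := by
  ext1 i j; simp [pd_apply]

lemma pd_mul (A B : PM) : pd (A * B) = pd A * B + A * pd B := by
  ext1 i j
  simp only [pd_apply, Matrix.mul_apply, Matrix.add_apply, Fin.sum_univ_two, derivative_add,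
    derivative_mul]
  ring

lemma matDeriv_ev (Q : PM) (t : ℝ) : matDeriv (fun u => ev u Q) t = ev t (pd Q) := by
  ext i j
  simp [matDeriv, ev_apply, pd_apply]

/-! ### The first three Hermite polynomials -/

lemma H_zero (t : ℝ) : H 0 t = 1 := by
  simp [H, ← Real.exp_add]

lemma hasDerivAt_gauss (t : ℝ) :
    HasDerivAt (fun s : ℝ => Real.exp (-(s ^ 2))) (-2 * t * Real.exp (-(t ^ 2))) t := by
  have h := ((hasDerivAt_pow 2 t).neg).exp
  refine h.congr_deriv ?_
  simp only [Pi.neg_apply]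
  push_cast
  ring

lemma deriv_gauss :
    deriv (fun s : ℝ => Real.exp (-(s ^ 2))) = fun t => -2 * t * Real.exp (-(t ^ 2)) :=
  funext fun t => (hasDerivAt_gauss t).deriv

lemma exp_mul_exp_neg_sq (t : ℝ) : Real.exp (t ^ 2) * Real.exp (-(t ^ 2)) = 1 := by
  rw [← Real.exp_add, add_neg_cancel, Real.exp_zero]

lemma H_one (t : ℝ) : H 1 t = 2 * t := by
  rw [H, iteratedDeriv_one, deriv_gauss]
  linear_combination (2 * t) * exp_mul_exp_neg_sq t

lemma H_two (t : ℝ) : H 2 t = 4 * t ^ 2 - 2 := by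
  have h : HasDerivAt (fun t : ℝ => -2 * t * Real.exp (-(t ^ 2)))
      ((4 * t ^ 2 - 2) * Real.exp (-(t ^ 2))) t := by
    refine (((hasDerivAt_id t).const_mul (-2)).mul (hasDerivAt_gauss t)).congr_deriv ?_
    simp only [id]
    ring
  rw [H, iteratedDeriv_succ, iteratedDeriv_one, deriv_gauss, h.deriv]
  linear_combination (4 * t ^ 2 - 2) * exp_mul_exp_neg_sq t

/-! ### The matrix polynomials attached to the two operators -/

/-- `P_{1,a}` as a matrix polynomial. -/
def P1p (a : ℝ) : PM := !![C 2 * X, C (-a); C (-a), C (a ^ 2 + 2) * X]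

/-- `P_{2,a}` as a matrix polynomial. -/
def P2p (a : ℝ) : PM :=
  !![C 4 * X ^ 2 - C 2, C (-4 * a) * X; C (-4 * a) * X, C (4 * (a ^ 2 + 1)) * X ^ 2 - C 2]

/-- `D = P_{1,a}'` as a constant matrix. -/
def Dm (a : ℝ) : M2 := !![2, 0; 0, a ^ 2 + 2]

/-- `D = P_{1,a}'` as a matrix polynomial. -/
def Dp (a : ℝ) : PM := !![C 2, 0; 0, C (a ^ 2 + 2)]

/-- `A₁₁ = D⁻¹ P_{1,a} D` as a matrix polynomial. -/
def A11p (a : ℝ) : PM :=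
  !![C 2 * X, C (-a * (a ^ 2 + 2) / 2); C (-2 * a / (a ^ 2 + 2)), C (a ^ 2 + 2) * X]

/-- `𝒜₁` acting on matrix polynomials. -/
def T1 (a : ℝ) (Q : PM) : PM := -(Q * Dp a) + pd Q * A11p a

/-- `E = P_{2,a}''`, a constant matrix. -/
def Em (a : ℝ) : M2 := !![8, 0; 0, 8 * (a ^ 2 + 1)]

/-- `G = D⁻¹ P_{1,a}` as a matrix polynomial. -/
def Gp (a : ℝ) : PM := !![X, C (-a / 2); C (-a / (a ^ 2 + 2)), X]

/-- `K = E⁻¹ 𝒫_{1,2,a} D⁻¹` as a matrix polynomial. -/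
def Kp (a : ℝ) : PM :=
  !![C (1 / 2) * X ^ 2 + C (1 / 4 + a ^ 2 / (2 * (a ^ 2 + 2))), C (-a / 2) * X;
     C (-a / (a ^ 2 + 2)) * X, C (1 / 2) * X ^ 2 + C (1 / 4)]

/-- The matrix polynomial `Q - Q' G + Q'' K`, which represents `𝒜₂(𝒜₁(Q))`. -/
def Rpoly (a : ℝ) (Q : PM) : PM := Q - pd Q * Gp a + pd (pd Q) * Kp a

/-! ### The operators on matrix polynomials -/

lemma Pher_one (a : ℝ) : Pher a 1 = fun t => ev t (P1p a) := by
  funext t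
  ext i j
  fin_cases i <;> fin_cases j <;> simp [Pher, ev_apply, P1p, H_zero, H_one]
  ring

lemma Pher_two (a : ℝ) : Pher a 2 = fun t => ev t (P2p a) := by
  funext t
  ext i j
  fin_cases i <;> fin_cases j <;> simp [Pher, ev_apply, P2p, H_one, H_two] <;> ring

lemma pd_P1p (a : ℝ) : pd (P1p a) = Dp a := by
  ext1 i j
  fin_cases i <;> fin_cases j <;> simp [pd_apply, P1p, Dp]

lemma pd_A11p (a : ℝ) : pd (A11p a) = Dp a := by
  ext1 i j
  fin_cases i <;> fin_cases j <;> simp [pd_apply, A11p, Dp]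

lemma pd_Dp (a : ℝ) : pd (Dp a) = 0 := by
  ext1 i j
  fin_cases i <;> fin_cases j <;> simp [pd_apply, Dp]

/-- `(𝒜₁(Q))' = Q'' A₁₁`: the terms in `Q'` cancel because `A₁₁' = D`. -/
lemma pd_T1 (a : ℝ) (Q : PM) : pd (T1 a Q) = pd (pd Q) * A11p a := by
  simp only [T1, pd_add, pd_neg, pd_mul, pd_Dp, pd_A11p]
  simp

lemma ev_Dp (a t : ℝ) : ev t (Dp a) = Dm a := by
  ext i j
  fin_cases i <;> fin_cases j <;> simp [ev_apply, Dp, Dm]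

lemma derivative_C_sq (a : ℝ) : derivative (C a ^ 2) = 0 := by
  rw [← C_pow, derivative_C]

lemma ev_pd_pd_P2p (a t : ℝ) : ev t (pd (pd (P2p a))) = Em a := by
  ext i j
  fin_cases i <;> fin_cases j <;> simp [ev_apply, pd_apply, P2p, Em, derivative_C_sq] <;> ring

lemma Dm_inv (a : ℝ) : (Dm a)⁻¹ = -A20 a := by
  have h : a ^ 2 + 2 ≠ 0 := by positivity
  refine Matrix.inv_eq_right_inv ?_
  ext i j
  fin_cases i <;> fin_cases j <;> simp [Dm, A20, h]

lemma Em_inv (a : ℝ) : (Em a)⁻¹ = !![1 / 8, 0; 0, 1 / (8 * (a ^ 2 + 1))] := by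
  have h : a ^ 2 + 1 ≠ 0 := by positivity
  refine Matrix.inv_eq_right_inv ?_
  ext i j
  fin_cases i <;> fin_cases j <;> simp [Em]
  field_simp

lemma Dm_conj (a t : ℝ) : (Dm a)⁻¹ * ev t (P1p a) * Dm a = ev t (A11p a) := by
  have h : a ^ 2 + 2 ≠ 0 := by positivity
  rw [Dm_inv]
  ext i j
  fin_cases i <;> fin_cases j <;>
    simp [ev_apply, P1p, A11p, Dm, A20, Matrix.mul_apply, Fin.sum_univ_two] <;> field_simp

lemma A1op_ev (a : ℝ) (Q : PM) : A1op a (fun u => ev u Q) = fun t => ev t (T1 a Q) := by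
  funext t
  simp only [A1op, Pher_one, matDeriv_ev, pd_P1p, ev_Dp, Dm_conj]
  simp [T1, ev_Dp]

lemma P12_eq (a : ℝ) : P12 a = fun t => ev t (T1 a (P2p a)) := by
  rw [P12, Pher_two, A1op_ev]

lemma ev_T1_mul_A20 (a t : ℝ) (Q : PM) :
    ev t (T1 a Q) * A20 a = ev t Q - ev t (pd Q) * ev t (Gp a) := by
  have h : a ^ 2 + 2 ≠ 0 := by positivity
  have h1 : Dm a * A20 a = -1 := by
    ext i j
    fin_cases i <;> fin_cases j <;> simp [Dm, A20, h]
  have h2 : ev t (A11p a) * A20 a = -ev t (Gp a) := by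
    ext i j
    fin_cases i <;> fin_cases j <;>
      simp [ev_apply, A11p, Gp, A20, Matrix.mul_apply, Fin.sum_univ_two] <;> field_simp
  simp only [T1, map_add, map_neg, map_mul, ev_Dp, add_mul, neg_mul, mul_assoc, h1, h2]
  simp [sub_eq_add_neg]

lemma ev_Kp (a t : ℝ) : (Em a)⁻¹ * (ev t (T1 a (P2p a)) * A20 a) = -ev t (Kp a) := by
  have h : a ^ 2 + 2 ≠ 0 := by positivity
  have h' : a ^ 2 + 1 ≠ 0 := by positivity
  rw [ev_T1_mul_A20, Em_inv]
  ext i j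
  fin_cases i <;> fin_cases j <;>
    simp [ev_apply, pd_apply, P2p, Gp, Kp, Matrix.mul_apply, Fin.sum_univ_two, derivative_C_sq] <;>
    field_simp <;> ring

lemma A2op_A1op_ev (a t : ℝ) (Q : PM) (hu : IsUnit (matDeriv (P12 a) t)) :
    A2op a (A1op a (fun u => ev u Q)) t = ev t (Rpoly a Q) := by
  have hd : matDeriv (P12 a) t = Em a * ev t (A11p a) := by
    rw [P12_eq, matDeriv_ev, pd_T1, map_mul, ev_pd_pd_P2p]
  have hA : IsUnit (ev t (A11p a)).det := by
    rw [hd, Matrix.isUnit_iff_isUnit_det, Matrix.det_mul] at hu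
    exact isUnit_of_mul_isUnit_right hu
  rw [A2op, hd, A1op_ev, matDeriv_ev, pd_T1, P12_eq, ev_T1_mul_A20, Matrix.mul_inv_rev]
  have hc : ev t (pd (pd Q) * A11p a) *
      -((ev t (A11p a))⁻¹ * (Em a)⁻¹ * ev t (T1 a (P2p a)) * A20 a)
      = ev t (pd (pd Q)) * ev t (Kp a) := by
    simp only [map_mul, mul_neg, mul_assoc]
    rw [← mul_assoc (ev t (A11p a)), Matrix.mul_nonsing_inv _ hA, one_mul, ev_Kp, mul_neg, neg_neg]
  rw [hc, Rpoly, map_add, map_sub, map_mul, map_mul]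

/-! ### Degree and leading coefficient -/

lemma coeff_derivative_mul_X (q : Polynomial ℝ) (n : ℕ) :
    (derivative q * X).coeff n = n * q.coeff n := by
  cases n with
  | zero => simp
  | succ k => rw [coeff_mul_X, coeff_derivative]; push_cast; ring

lemma coeff_derivative2_mul_X (q : Polynomial ℝ) (n : ℕ) :
    (derivative (derivative q) * X).coeff n = n * (n + 1) * q.coeff (n + 1) := by
  rw [coeff_derivative_mul_X, coeff_derivative]; ring

lemma coeff_derivative2_mul_X_sq (q : Polynomial ℝ) (n : ℕ) :
    (derivative (derivative q) * X ^ 2).coeff n = n * (n - 1) * q.coeff n := by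
  rw [pow_two, ← mul_assoc]
  cases n with
  | zero => simp
  | succ k => rw [coeff_mul_X, coeff_derivative2_mul_X]; push_cast; ring

/-- Only the diagonal terms `X` of `G` and `X² / 2` of `K` reach the coefficients from `s` on, since
all others involve coefficients of `Q` beyond its degree. -/
lemma coeff_Rpoly (a : ℝ) (s : ℕ) (Q : PM) (hdeg : ∀ i j, (Q i j).degree ≤ (s : ℕ))
    (n : ℕ) (hn : s ≤ n) (i j : Fin 2) :
    (Rpoly a Q i j).coeff n = (((n : ℝ) - 1) * ((n : ℝ) / 2 - 1)) * (Q i j).coeff n := by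
  have hz (k : Fin 2) (m : ℕ) (hm : s < m) : (Q i k).coeff m = 0 :=
    coeff_eq_zero_of_degree_lt ((hdeg i k).trans_lt (by exact_mod_cast hm))
  have e1 (k : Fin 2) (c : ℝ) : (derivative (Q i k) * C c).coeff n = 0 := by
    rw [coeff_mul_C, coeff_derivative, hz k _ (by omega)]; ring
  have e2 (k : Fin 2) (c : ℝ) : (derivative (derivative (Q i k)) * C c).coeff n = 0 := by
    rw [coeff_mul_C, coeff_derivative, coeff_derivative, hz k _ (by omega)]; ring
  have e3 (k : Fin 2) (c : ℝ) : (derivative (derivative (Q i k)) * (C c * X)).coeff n = 0 := by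
    rw [mul_left_comm, coeff_C_mul, coeff_derivative2_mul_X, hz k _ (by omega)]; ring
  have e4 (k : Fin 2) (c : ℝ) : (derivative (derivative (Q i k)) * (C c * X ^ 2)).coeff n
      = c * (n * (n - 1) * (Q i k).coeff n) := by
    rw [mul_left_comm, coeff_C_mul, coeff_derivative2_mul_X_sq]
  have hR : Rpoly a Q i j = Q i j
      - (derivative (Q i 0) * Gp a 0 j + derivative (Q i 1) * Gp a 1 j)
      + (derivative (derivative (Q i 0)) * Kp a 0 j
        + derivative (derivative (Q i 1)) * Kp a 1 j) := by
    simp only [Rpoly, Matrix.add_apply, Matrix.sub_apply, Matrix.mul_apply, Fin.sum_univ_two,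
      pd_apply]
  rw [hR]
  have hG : Gp a 0 0 = X ∧ Gp a 0 1 = C (-a / 2) ∧ Gp a 1 0 = C (-a / (a ^ 2 + 2)) ∧
      Gp a 1 1 = X := ⟨rfl, rfl, rfl, rfl⟩
  have hK : Kp a 0 0 = C (1 / 2) * X ^ 2 + C (1 / 4 + a ^ 2 / (2 * (a ^ 2 + 2))) ∧
      Kp a 0 1 = C (-a / 2) * X ∧ Kp a 1 0 = C (-a / (a ^ 2 + 2)) * X ∧
      Kp a 1 1 = C (1 / 2) * X ^ 2 + C (1 / 4) := ⟨rfl, rfl, rfl, rfl⟩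
  obtain ⟨g1, g2, g3, g4⟩ := hG
  obtain ⟨k1, k2, k3, k4⟩ := hK
  fin_cases j
  · simp only [Fin.zero_eta, g1, g3, k1, k3, mul_add, coeff_add, coeff_sub, e1, e2, e3, e4,
      coeff_derivative_mul_X]
    ring
  · simp only [Fin.mk_one, g2, g4, k2, k4, mul_add, coeff_add, coeff_sub, e1, e2, e3, e4,
      coeff_derivative_mul_X]
    ring

/-- For every matrix polynomial `P` of degree `s ∉ {1,2}` with
nonsingular leading coefficient `L`, the two-step quasi-Darboux transform `𝒜₂(𝒜₁(P))`
is a matrix polynomial of degree `s` with (nonsingular) leading coefficient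
`(s−1)(s/2 − 1)·L`. -/
theorem two_step_quasi_darboux_degree (a : ℝ) (ha : a ≠ 0)
    (s : ℕ) (hs : s ∉ ({1, 2} : Set ℕ))
    (Q : Matrix (Fin 2) (Fin 2) (Polynomial ℝ))
    (hdeg : ∀ i j, (Q i j).degree ≤ (s : ℕ))
    (L : M2) (hL : L = Matrix.of fun i j => (Q i j).coeff s) (hLunit : IsUnit L) :
    ∃ R : Matrix (Fin 2) (Fin 2) (Polynomial ℝ),
      (∀ t : ℝ, IsUnit (matDeriv (P12 a) t) →
        A2op a (A1op a (fun u => Matrix.of fun i j => (Q i j).eval u)) t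
          = Matrix.of fun i j => (R i j).eval t) ∧
      (∀ i j, (R i j).degree ≤ (s : ℕ)) ∧
      (Matrix.of fun i j => (R i j).coeff s)
        = (((s : ℝ) - 1) * ((s : ℝ) / 2 - 1)) • L ∧
      IsUnit ((((s : ℝ) - 1) * ((s : ℝ) / 2 - 1)) • L) := by
  have hne : ((s : ℝ) - 1) * ((s : ℝ) / 2 - 1) ≠ 0 := by
    simp only [Set.mem_insert_iff, Set.mem_singleton_iff, not_or] at hs
    refine mul_ne_zero (fun h => hs.1 ?_) (fun h => hs.2 ?_)
    · exact_mod_cast (by linarith : (s : ℝ) = 1)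
    · exact_mod_cast (by linarith : (s : ℝ) = 2)
  refine ⟨Rpoly a Q, fun t ht => A2op_A1op_ev a t Q ht, fun i j => ?_, ?_, ?_⟩
  · rw [degree_le_iff_coeff_zero]
    intro n hn
    have hn' : s < n := by exact_mod_cast hn
    rw [coeff_Rpoly a s Q hdeg n hn'.le,
      coeff_eq_zero_of_degree_lt ((hdeg i j).trans_lt hn), mul_zero]
  · ext i j
    simp [hL, coeff_Rpoly a s Q hdeg s le_rfl]
  · rw [Matrix.isUnit_iff_isUnit_det] at hLunit ⊢
    rw [Matrix.det_smul]
    exact ((isUnit_iff_ne_zero.2 hne).pow _).mul hLunit
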